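/- Let λ ∈ ℝ. The function −F_λ(x), where F_λ(x) = ψ'(x) − λ(4 + 8x + 5x²)/(24x(1+x)³(2+x)²) − (24 + 120x + 283x² + 399x³ + 345x⁴ + 181x⁵ + 51x⁶ + 6x⁷)/(6x²(1+x)⁴(2+x)²), is completely monotonic on (0,∞) if and only if λ ≥ 4. -/

import Mathlib

/-- The digamma function `ψ(x) = Γ'(x)/Γ(x)`. -/
noncomputable def digamma (x : ℝ) : ℝ := deriv Real.Gamma x / Real.Gamma x

/-- A function is completely monotonic on a set `s` if it has derivatives of all
orders there and `(-1)^n f^(n)(x) ≥ 0` for all `x ∈ s` and all `n ≥ 0`. -/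
def CompletelyMonotonicOn (f : ℝ → ℝ) (s : Set ℝ) : Prop :=
  ContDiffOn ℝ (⊤ : ℕ∞) f s ∧
    ∀ n : ℕ, ∀ x ∈ s, 0 ≤ (-1 : ℝ) ^ n * iteratedDerivWithin n f s x

/-!
Write `-F_lam = -F₄ + (lam - 4) * A` with `A` the rational function multiplying `lam`, and
`F₄ = ψ' - R` with `R` rational. By a computation `R x - R (x + 1) = 1 / x ^ 2 + D x`, where `D` is
a polynomial with nonnegative coefficients in the reciprocals of `x`, `x + 1`, `x + 2`, `x + 3`,
hence completely monotonic. Since `R` vanishes at infinity and `ψ' x = ∑ 1 / (x + k) ^ 2`, summing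
over the translates gives `-F₄ x = ∑ D (x + k)`. A pointwise convergent series of completely
monotonic functions is completely monotonic, because convexity bounds the derivative of a term at
`y` by the value of that term at a smaller point. As `A` is completely monotonic too, so is
`-F_lam` for `4 ≤ lam`. Conversely, `D = O(x⁻⁶)` yields `F₄ = O(x⁻⁵)`, whereas
`x ^ 4 * A x → 5 / 24`, so `-F_lam ≥ 0` near infinity forces `4 ≤ lam`.
-/

open Set Filter Topology
open scoped NNReal

/-! ### Completely monotonic functions -/

theorem exists_lt_mem_of_isOpen {α : Type*} [LinearOrder α] [TopologicalSpace α] [OrderTopology α]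
    [DenselyOrdered α] [NoMinOrder α] {s : Set α} (hs : IsOpen s) {x : α} (hx : x ∈ s) :
    ∃ y ∈ s, y < x :=
  Filter.nonempty_of_mem
    (inter_mem (mem_nhdsWithin_of_mem_nhds (hs.mem_nhds hx)) (self_mem_nhdsWithin (s := Iio x)))

namespace CompletelyMonotonicOn

variable {f g : ℝ → ℝ} {s : Set ℝ}

theorem congr (hf : CompletelyMonotonicOn f s) (h : EqOn g f s) : CompletelyMonotonicOn g s :=
  ⟨hf.1.congr h, fun n x hx ↦ by simpa only [iteratedDerivWithin_congr h hx] using hf.2 n x hx⟩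

theorem nonneg (hf : CompletelyMonotonicOn f s) {x : ℝ} (hx : x ∈ s) : 0 ≤ f x := by
  simpa using hf.2 0 x hx

theorem contDiffWithinAt (hf : CompletelyMonotonicOn f s) {x : ℝ} (hx : x ∈ s) (n : ℕ) :
    ContDiffWithinAt ℝ n f s x :=
  (hf.1 x hx).of_le (mod_cast le_top)

theorem add (hs : UniqueDiffOn ℝ s) (hf : CompletelyMonotonicOn f s)
    (hg : CompletelyMonotonicOn g s) : CompletelyMonotonicOn (fun x ↦ f x + g x) s := by
  refine ⟨hf.1.add hg.1, fun n x hx ↦ ?_⟩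
  rw [iteratedDerivWithin_fun_add hx hs (hf.contDiffWithinAt hx n) (hg.contDiffWithinAt hx n),
    mul_add]
  exact add_nonneg (hf.2 n x hx) (hg.2 n x hx)

theorem const_mul {c : ℝ} (hc : 0 ≤ c) (hf : CompletelyMonotonicOn f s) :
    CompletelyMonotonicOn (fun x ↦ c * f x) s := by
  refine ⟨contDiffOn_const.mul hf.1, fun n x hx ↦ ?_⟩
  rw [iteratedDerivWithin_const_mul_field, mul_left_comm]
  exact mul_nonneg hc (hf.2 n x hx)

theorem mul (hs : UniqueDiffOn ℝ s) (hf : CompletelyMonotonicOn f s)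
    (hg : CompletelyMonotonicOn g s) : CompletelyMonotonicOn (fun x ↦ f x * g x) s := by
  refine ⟨hf.1.mul hg.1, fun n x hx ↦ ?_⟩
  have leibniz : iteratedDerivWithin n (fun x ↦ f x * g x) s x = _ :=
    iteratedDerivWithin_mul hx hs (hf.contDiffWithinAt hx n) (hg.contDiffWithinAt hx n)
  rw [leibniz, Finset.mul_sum]
  refine Finset.sum_nonneg fun i hi ↦ ?_
  have sign_split : (-1 : ℝ) ^ n = (-1) ^ i * (-1) ^ (n - i) := by
    rw [← pow_add, Nat.add_sub_cancel' (Finset.mem_range_succ_iff.1 hi)]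
  calc
    0 ≤ (n.choose i : ℝ) * ((-1) ^ i * iteratedDerivWithin i f s x) *
          ((-1) ^ (n - i) * iteratedDerivWithin (n - i) g s x) :=
      mul_nonneg (mul_nonneg (Nat.cast_nonneg _) (hf.2 i x hx)) (hg.2 (n - i) x hx)
    _ = _ := by rw [sign_split]; ring

theorem coinduct (hs : UniqueDiffOn ℝ s) (P : (ℝ → ℝ) → Prop)
    (nonneg : ∀ f, P f → ∀ x ∈ s, 0 ≤ f x)
    (step : ∀ f, P f → ∃ g, P g ∧ ∀ x ∈ s, HasDerivWithinAt f (-g x) s x) (hf : P f) :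
    CompletelyMonotonicOn f s := by
  have derivWithin_eq {f g : ℝ → ℝ} (hfg : ∀ x ∈ s, HasDerivWithinAt f (-g x) s x) :
      EqOn (derivWithin f s) (fun x ↦ -g x) s := fun x hx ↦ (hfg x hx).derivWithin (hs x hx)
  refine ⟨contDiffOn_infty.2 fun n ↦ ?_, fun n ↦ ?_⟩
  · induction n generalizing f with
    | zero =>
      obtain ⟨g, -, hfg⟩ := step f hf
      exact contDiffOn_zero.2 fun x hx ↦ (hfg x hx).continuousWithinAt
    | succ n ih =>
      obtain ⟨g, hg, hfg⟩ := step f hf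
      exact (contDiffOn_succ_iff_derivWithin hs).2 ⟨fun x hx ↦ (hfg x hx).differentiableWithinAt,
        by simp, (ih hg).neg.congr (derivWithin_eq hfg)⟩
  · induction n generalizing f with
    | zero => simpa using nonneg f hf
    | succ n ih =>
      obtain ⟨g, hg, hfg⟩ := step f hf
      intro x hx
      rw [iteratedDerivWithin_succ', iteratedDerivWithin_congr (derivWithin_eq hfg) hx,
        iteratedDerivWithin_fun_neg, pow_succ, mul_neg_one, neg_mul_neg]
      exact ih hg x hx

theorem hasDerivAt (hs : IsOpen s) (hf : CompletelyMonotonicOn f s) {x : ℝ} (hx : x ∈ s) :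
    HasDerivAt f (deriv f x) x :=
  ((hf.1.contDiffAt (hs.mem_nhds hx)).differentiableAt (by simp)).hasDerivAt

theorem neg_deriv (hs : IsOpen s) (hf : CompletelyMonotonicOn f s) :
    CompletelyMonotonicOn (fun x ↦ -deriv f x) s := by
  refine ⟨(hf.1.deriv_of_isOpen hs (by simp)).neg, fun n x hx ↦ ?_⟩
  have deriv_eq : EqOn (deriv f) (derivWithin f s) s :=
    fun y hy ↦ (derivWithin_of_isOpen hs hy).symm
  rw [iteratedDerivWithin_fun_neg, iteratedDerivWithin_congr deriv_eq hx,
    ← iteratedDerivWithin_succ', ← neg_mul_comm, ← mul_neg_one, ← pow_succ]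
  exact hf.2 (n + 1) x hx

theorem antitoneOn (hs : IsOpen s) (hconv : Convex ℝ s) (hf : CompletelyMonotonicOn f s) :
    AntitoneOn f s := by
  refine antitoneOn_of_deriv_nonpos hconv hf.1.continuousOn ?_ ?_ <;> rw [hs.interior_eq]
  · exact hf.1.differentiableOn (by simp)
  · exact fun x hx ↦ neg_nonneg.1 ((hf.neg_deriv hs).nonneg hx)

theorem convexOn (hs : IsOpen s) (hconv : Convex ℝ s) (hf : CompletelyMonotonicOn f s) :
    ConvexOn ℝ s f := by
  refine MonotoneOn.convexOn_of_deriv hconv hf.1.continuousOn ?_ ?_ <;> rw [hs.interior_eq]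
  · exact hf.1.differentiableOn (by simp)
  · simpa using ((hf.neg_deriv hs).antitoneOn hs hconv).neg

theorem neg_deriv_le_sub_div (hs : IsOpen s) (hconv : Convex ℝ s)
    (hf : CompletelyMonotonicOn f s) {x y : ℝ} (hx : x ∈ s) (hy : y ∈ s) (hxy : x < y) :
    -deriv f y ≤ (f x - f y) / (y - x) := by
  have slope_le : slope f x y ≤ deriv f y :=
    (hf.convexOn hs hconv).slope_le_of_hasDerivAt hx hy hxy (hf.hasDerivAt hs hy)
  rwa [slope_def_field, ← neg_le_neg_iff, ← neg_div, neg_sub] at slope_le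

theorem neg_deriv_le_div (hs : IsOpen s) (hconv : Convex ℝ s) (hf : CompletelyMonotonicOn f s)
    {x y : ℝ} (hx : x ∈ s) (hy : y ∈ s) (hxy : x < y) : -deriv f y ≤ f x / (y - x) :=
  (hf.neg_deriv_le_sub_div hs hconv hx hy hxy).trans <|
    div_le_div_of_nonneg_right (sub_le_self _ (hf.nonneg hy)) (sub_pos.2 hxy).le

theorem comp_add_const {t : Set ℝ} {a : ℝ} (hs : UniqueDiffOn ℝ s) (ht : IsOpen t)
    (hst : MapsTo (· + a) s t) (hf : CompletelyMonotonicOn f t) :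
    CompletelyMonotonicOn (fun x ↦ f (x + a)) s := by
  refine coinduct hs (fun F ↦ ∃ f, CompletelyMonotonicOn f t ∧ F = fun x ↦ f (x + a)) ?_ ?_
    ⟨f, hf, rfl⟩
  · rintro _ ⟨f, hf, rfl⟩ x hx
    exact hf.nonneg (hst hx)
  · rintro _ ⟨f, hf, rfl⟩
    refine ⟨_, ⟨_, hf.neg_deriv ht, rfl⟩, fun x hx ↦ ?_⟩
    simpa using ((hf.hasDerivAt ht (hst hx)).comp_add_const x a).hasDerivWithinAt

section tsum

variable {ι : Type*} {F : ι → ℝ → ℝ}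

theorem summable_neg_deriv (hs : IsOpen s) (hconv : Convex ℝ s)
    (hF : ∀ i, CompletelyMonotonicOn (F i) s) (hsum : ∀ x ∈ s, Summable fun i ↦ F i x)
    {x : ℝ} (hx : x ∈ s) : Summable fun i ↦ -deriv (F i) x := by
  obtain ⟨y, hy, hyx⟩ := exists_lt_mem_of_isOpen hs hx
  exact .of_nonneg_of_le (fun i ↦ ((hF i).neg_deriv hs).nonneg hx)
    (fun i ↦ (hF i).neg_deriv_le_div hs hconv hy hx hyx) ((hsum y hy).div_const _)

theorem hasDerivAt_tsum (hs : IsOpen s) (hconv : Convex ℝ s)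
    (hF : ∀ i, CompletelyMonotonicOn (F i) s) (hsum : ∀ x ∈ s, Summable fun i ↦ F i x)
    {x : ℝ} (hx : x ∈ s) : HasDerivAt (fun y ↦ ∑' i, F i y) (∑' i, deriv (F i) x) x := by
  obtain ⟨y, hy, hyx⟩ := exists_lt_mem_of_isOpen hs hx
  have hmem : x ∈ s ∩ Ioi y := ⟨hx, hyx⟩
  refine hasDerivAt_tsum_of_isPreconnected (summable_neg_deriv hs hconv hF hsum hy)
    (hs.inter isOpen_Ioi) (hconv.inter (convex_Ioi y)).isPreconnected
    (fun i z hz ↦ (hF i).hasDerivAt hs hz.1) (fun i z hz ↦ ?_) hmem (hsum x hx) hmem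
  have hF' := (hF i).neg_deriv hs
  rw [← norm_neg, Real.norm_of_nonneg (hF'.nonneg hz.1)]
  exact hF'.antitoneOn hs hconv hy hz.1 hz.2.le

protected theorem tsum (hs : IsOpen s) (hconv : Convex ℝ s)
    (hF : ∀ i, CompletelyMonotonicOn (F i) s) (hsum : ∀ x ∈ s, Summable fun i ↦ F i x) :
    CompletelyMonotonicOn (fun x ↦ ∑' i, F i x) s := by
  refine coinduct hs.uniqueDiffOn
    (fun f ↦ ∃ F : ι → ℝ → ℝ, (∀ i, CompletelyMonotonicOn (F i) s) ∧
      (∀ x ∈ s, Summable fun i ↦ F i x) ∧ f = fun x ↦ ∑' i, F i x) ?_ ?_ ⟨F, hF, hsum, rfl⟩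
  · rintro _ ⟨F, hF, -, rfl⟩ x hx
    exact tsum_nonneg fun i ↦ (hF i).nonneg hx
  · rintro _ ⟨F, hF, hsum, rfl⟩
    refine ⟨_, ⟨fun i x ↦ -deriv (F i) x, fun i ↦ (hF i).neg_deriv hs,
      fun x hx ↦ summable_neg_deriv hs hconv hF hsum hx, rfl⟩, fun x hx ↦ ?_⟩
    simpa only [tsum_neg, neg_neg] using (hasDerivAt_tsum hs hconv hF hsum hx).hasDerivWithinAt

end tsum

end CompletelyMonotonicOn

theorem hasDerivAt_const_div_add_pow (c : ℝ) {a x : ℝ} (hx : x + a ≠ 0) (m : ℕ) :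
    HasDerivAt (fun y ↦ c / (y + a) ^ m) (-(c * m / (x + a) ^ (m + 1))) x := by
  have := ((hasDerivAt_zpow (-m) (x + a) (.inl hx)).comp_add_const x a).const_mul c
  simp only [zpow_neg, zpow_natCast, ← div_eq_mul_inv] at this
  refine this.congr_deriv ?_
  rw [show (-m : ℤ) - 1 = -((m + 1 : ℕ) : ℤ) by push_cast; ring, zpow_neg, zpow_natCast]
  push_cast
  ring

theorem completelyMonotonicOn_const_div_add_pow {s : Set ℝ} (hs : UniqueDiffOn ℝ s) {c a : ℝ}
    (hc : 0 ≤ c) (ha : ∀ x ∈ s, 0 < x + a) (m : ℕ) :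
    CompletelyMonotonicOn (fun x ↦ c / (x + a) ^ m) s := by
  refine .coinduct hs (fun f ↦ ∃ c ≥ 0, ∃ m : ℕ, f = fun x ↦ c / (x + a) ^ m) ?_ ?_
    ⟨c, hc, m, rfl⟩
  · rintro _ ⟨c, hc, m, rfl⟩ x hx
    exact div_nonneg hc (pow_pos (ha x hx) m).le
  · rintro _ ⟨c, hc, m, rfl⟩
    exact ⟨_, ⟨c * m, by positivity, m + 1, rfl⟩, fun x hx ↦
      (hasDerivAt_const_div_add_pow c (ha x hx).ne' m).hasDerivWithinAt⟩

theorem completelyMonotonicOn_Ioi_const_div_add_pow (c a : ℝ≥0) (m : ℕ) :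
    CompletelyMonotonicOn (fun x ↦ c / (x + a) ^ m) (Ioi 0) :=
  completelyMonotonicOn_const_div_add_pow (uniqueDiffOn_Ioi 0) c.2
    (fun _ hx ↦ add_pos_of_pos_of_nonneg hx a.2) m

/-! ### The digamma function -/

theorem hasDerivAt_log_Gamma {x : ℝ} (hx : 0 < x) :
    HasDerivAt (Real.log ∘ Real.Gamma) (digamma x) x :=
  (Real.differentiableOn_Gamma_Ioi.differentiableAt (Ioi_mem_nhds hx)).hasDerivAt.log
    (Real.Gamma_pos_of_pos hx).ne'

theorem log_Gamma_add_one {x : ℝ} (hx : 0 < x) :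
    (Real.log ∘ Real.Gamma) (x + 1) = (Real.log ∘ Real.Gamma) x + Real.log x := by
  simp only [Function.comp_apply]
  rw [Real.Gamma_add_one hx.ne', Real.log_mul hx.ne' (Real.Gamma_pos_of_pos hx).ne', add_comm]

theorem digamma_add_one {x : ℝ} (hx : 0 < x) : digamma (x + 1) = digamma x + 1 / x := by
  have hshift : HasDerivAt (fun y ↦ (Real.log ∘ Real.Gamma) (y + 1)) (digamma (x + 1)) x :=
    (hasDerivAt_log_Gamma (add_pos hx one_pos)).comp_add_const x 1
  have hsum : HasDerivAt (fun y ↦ (Real.log ∘ Real.Gamma) y + Real.log y) (digamma x + x⁻¹) x :=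
    (hasDerivAt_log_Gamma hx).add (Real.hasDerivAt_log hx.ne')
  rw [one_div]
  refine hshift.unique (hsum.congr_of_eventuallyEq ?_)
  filter_upwards [Ioi_mem_nhds hx] with y hy using log_Gamma_add_one hy

theorem digamma_add_natCast {x : ℝ} (hx : 0 < x) (n : ℕ) :
    digamma (x + n) = digamma x + ∑ k ∈ Finset.range n, 1 / (x + k) := by
  induction n with
  | zero => simp
  | succ n ih =>
    rw [Finset.sum_range_succ, ← add_assoc, ← ih, ← digamma_add_one (by positivity),
      Nat.cast_succ, add_assoc]

theorem slope_log_Gamma_add_one {x : ℝ} (hx : 0 < x) :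
    slope (Real.log ∘ Real.Gamma) x (x + 1) = Real.log x := by
  rw [slope_def_field, log_Gamma_add_one hx, add_sub_cancel_left, add_sub_cancel_left, div_one]

theorem digamma_le_log {x : ℝ} (hx : 0 < x) : digamma x ≤ Real.log x :=
  slope_log_Gamma_add_one hx ▸ Real.convexOn_log_Gamma.le_slope_of_hasDerivAt hx
    (mem_Ioi.2 (add_pos hx one_pos)) (lt_add_one x) (hasDerivAt_log_Gamma hx)

theorem log_sub_one_div_le_digamma {x : ℝ} (hx : 0 < x) : Real.log x - 1 / x ≤ digamma x := by
  rw [sub_le_iff_le_add, ← digamma_add_one hx, ← slope_log_Gamma_add_one hx]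
  have hx₁ : 0 < x + 1 := add_pos hx one_pos
  exact Real.convexOn_log_Gamma.slope_le_of_hasDerivAt hx hx₁ (lt_add_one x)
    (hasDerivAt_log_Gamma hx₁)

theorem tendsto_digamma_sub_log : Tendsto (fun x ↦ digamma x - Real.log x) atTop (𝓝 0) := by
  have hlower : Tendsto (fun x : ℝ ↦ -(1 / x)) atTop (𝓝 0) := by
    simpa using (tendsto_inv_atTop_zero (𝕜 := ℝ)).neg
  refine tendsto_of_tendsto_of_tendsto_of_le_of_le' hlower tendsto_const_nhds ?_ ?_ <;>
    filter_upwards [eventually_gt_atTop 0] with x hx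
  · linarith [log_sub_one_div_le_digamma hx]
  · linarith [digamma_le_log hx]

theorem tendsto_log_sub_sum_one_div {x : ℝ} (hx : 0 < x) :
    Tendsto (fun n : ℕ ↦ Real.log n - ∑ k ∈ Finset.range n, 1 / (x + k)) atTop
      (𝓝 (digamma x)) := by
  have hcast : Tendsto (fun n : ℕ ↦ (n : ℝ)) atTop atTop := tendsto_natCast_atTop_atTop
  have hψ := tendsto_digamma_sub_log.comp (tendsto_atTop_add_const_left _ x hcast)
  have hlog := (Real.tendsto_log_comp_add_sub_log x).comp hcast
  have := ((hψ.add hlog).const_sub (digamma x))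
  rw [add_zero, sub_zero] at this
  refine this.congr fun n ↦ ?_
  simp only [Function.comp_apply, digamma_add_natCast hx, add_comm (n : ℝ) x]
  ring

theorem summable_one_div_add_natCast_sq {x : ℝ} (hx : 0 < x) :
    Summable fun k : ℕ ↦ 1 / (x + k) ^ 2 := by
  refine ((Real.summable_one_div_nat_add_rpow x 2).2 one_lt_two).congr fun k ↦ ?_
  rw [abs_of_nonneg (by positivity), add_comm, Real.rpow_two]

theorem hasDerivAt_digamma {x : ℝ} (hx : 0 < x) :
    HasDerivAt digamma (∑' k : ℕ, 1 / (x + k) ^ 2) x := by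
  have pos_of_half_lt {y : ℝ} (hy : y ∈ Ioi (x / 2)) : 0 < y := (half_pos hx).trans hy
  have hunif : TendstoUniformlyOn (fun n y ↦ ∑ k ∈ Finset.range n, 1 / (y + (k : ℝ)) ^ 2)
      (fun y ↦ ∑' k : ℕ, 1 / (y + k) ^ 2) atTop (Ioi (x / 2)) := by
    refine tendstoUniformlyOn_tsum_nat (summable_one_div_add_natCast_sq (half_pos hx))
      fun k y hy ↦ ?_
    rw [Real.norm_of_nonneg (by positivity)]
    have := mem_Ioi.1 hy
    gcongr
  refine hasDerivAt_of_tendstoUniformlyOn isOpen_Ioi hunif (.of_forall fun n y hy ↦ ?_)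
    (fun y hy ↦ tendsto_log_sub_sum_one_div (pos_of_half_lt hy)) (half_lt_self hx)
  have hterm (k : ℕ) : HasDerivAt (fun z : ℝ ↦ 1 / (z + k)) (-(1 / (y + k) ^ 2)) y := by
    have := pos_of_half_lt hy
    simpa using hasDerivAt_const_div_add_pow 1 (a := (k : ℝ)) (x := y) (by positivity) 1
  simpa using (HasDerivAt.fun_sum fun k _ ↦ hterm k).const_sub (Real.log n)

theorem hasSum_deriv_digamma {x : ℝ} (hx : 0 < x) :
    HasSum (fun k : ℕ ↦ 1 / (x + k) ^ 2) (deriv digamma x) :=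
  (hasDerivAt_digamma hx).deriv ▸ (summable_one_div_add_natCast_sq hx).hasSum

/-! ### The rational functions of the theorem and their asymptotics -/

theorem hasSum_sub_add_one_of_tendsto_zero {g : ℝ → ℝ} {x : ℝ}
    (hanti : ∀ k : ℕ, g (x + k + 1) ≤ g (x + k)) (hlim : Tendsto g atTop (𝓝 0)) :
    HasSum (fun k : ℕ ↦ g (x + k) - g (x + k + 1)) (g x) := by
  rw [hasSum_iff_tendsto_nat_of_nonneg fun k ↦ sub_nonneg.2 (hanti k)]
  have hshift : Tendsto (fun n : ℕ ↦ g (x + n)) atTop (𝓝 0) :=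
    hlim.comp (tendsto_atTop_add_const_left _ x tendsto_natCast_atTop_atTop)
  have hpartial : Tendsto (fun n : ℕ ↦ g x - g (x + n)) atTop (𝓝 (g x)) := by
    simpa using hshift.const_sub (g x)
  refine hpartial.congr fun n ↦ ?_
  simpa [add_assoc] using (Finset.sum_range_sub' (fun k : ℕ ↦ g (x + k)) n).symm

theorem tendsto_const_div_add_pow_atTop (c a : ℝ) {m : ℕ} (hm : m ≠ 0) :
    Tendsto (fun x : ℝ ↦ c / (x + a) ^ m) atTop (𝓝 0) :=
  tendsto_const_nhds.div_atTop
    ((tendsto_pow_atTop hm).comp (tendsto_atTop_add_const_right _ a tendsto_id))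

/-- The rational function `ψ' - F₄`, in partial fractions; it is an upper bound for the trigamma
function `ψ'`. -/
noncomputable def trigammaMajorant (x : ℝ) : ℝ :=
  1 / x ^ 2 + 1 / (6 * x) - 1 / (2 * (x + 1) ^ 4) + 11 / (6 * (x + 1) ^ 3) - 3 / (x + 1) ^ 2 +
    17 / (3 * (x + 1)) - 3 / (2 * (x + 2) ^ 2) - 29 / (6 * (x + 2))

/-- The failure `R x - R (x + 1) - 1 / x ^ 2` of `R = trigammaMajorant` to satisfy the functional
equation of `ψ'`. It is written with products of reciprocals of `x + j` and nonnegative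
coefficients, which makes it visibly completely monotonic. -/
noncomputable def trigammaMajorantDefect (x : ℝ) : ℝ :=
  1 / (x + 2) ^ 4 * (1 / (x + 3) ^ 2) *
    (24 / x * (1 / (x + 1) ^ 4) + 22 / (x + 1) ^ 4 + 64 / 3 / (x + 1) ^ 3 +
      145 / 6 / (x + 1) ^ 2 + 115 / 6 / (x + 1) + 41 / 6)

/-- The coefficient of `lam` in `-F_lam`. -/
noncomputable def trigammaCorrection (x : ℝ) : ℝ :=
  (4 + 8 * x + 5 * x ^ 2) / (24 * x * (1 + x) ^ 3 * (2 + x) ^ 2)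

theorem trigammaMajorant_sub_add_one {x : ℝ} (hx : 0 < x) :
    trigammaMajorant x - trigammaMajorant (x + 1) = 1 / x ^ 2 + trigammaMajorantDefect x := by
  have shift_one : x + 1 + 1 = x + 2 := by ring
  have shift_two : x + 1 + 2 = x + 3 := by ring
  simp only [trigammaMajorant, trigammaMajorantDefect, shift_one, shift_two]
  field_simp
  ring

theorem tendsto_trigammaMajorant : Tendsto trigammaMajorant atTop (𝓝 0) := by
  have key (c a : ℝ) (m : ℕ) : Tendsto (fun x : ℝ ↦ c / (x + a) ^ (m + 1)) atTop (𝓝 0) :=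
    tendsto_const_div_add_pow_atTop c a m.succ_ne_zero
  have hlim := (key 1 0 1).add (key (1 / 6) 0 0) |>.sub (key (1 / 2) 1 3) |>.add (key (11 / 6) 1 2)
    |>.sub (key 3 1 1) |>.add (key (17 / 3) 1 0) |>.sub (key (3 / 2) 2 1) |>.sub (key (29 / 6) 2 0)
  simp only [add_zero, sub_zero, zero_add, pow_one, Nat.reduceAdd] at hlim
  refine hlim.congr fun x ↦ ?_
  simp only [trigammaMajorant, div_mul_eq_div_div]

theorem completelyMonotonicOn_trigammaMajorantDefect :
    CompletelyMonotonicOn trigammaMajorantDefect (Ioi 0) := by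
  have hU : UniqueDiffOn ℝ (Ioi (0 : ℝ)) := uniqueDiffOn_Ioi 0
  have cm := completelyMonotonicOn_Ioi_const_div_add_pow
  have hprefactor := (cm 1 2 4).mul hU (cm 1 3 2)
  have hsum := ((cm 24 0 1).mul hU (cm 1 1 4)).add hU (cm 22 1 4) |>.add hU (cm (64 / 3) 1 3)
    |>.add hU (cm (145 / 6) 1 2) |>.add hU (cm (115 / 6) 1 1) |>.add hU (cm (41 / 6) 0 0)
  refine (hprefactor.mul hU hsum).congr fun x _ ↦ ?_
  simp [trigammaMajorantDefect]

theorem trigammaCorrection_eq {x : ℝ} (hx : 0 < x) :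
    trigammaCorrection x = 1 / (x + 2) ^ 2 *
      (1 / 6 / x * (1 / (x + 1) ^ 3) + 1 / 8 / (x + 1) ^ 3 + 5 / 24 / (x + 1) ^ 2) := by
  rw [trigammaCorrection, add_comm 1 x, add_comm 2 x]
  field_simp
  ring

theorem completelyMonotonicOn_trigammaCorrection :
    CompletelyMonotonicOn trigammaCorrection (Ioi 0) := by
  have hU : UniqueDiffOn ℝ (Ioi (0 : ℝ)) := uniqueDiffOn_Ioi 0
  have cm := completelyMonotonicOn_Ioi_const_div_add_pow
  have hsum := ((cm (1 / 6) 0 1).mul hU (cm 1 1 3)).add hU (cm (1 / 8) 1 3)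
    |>.add hU (cm (5 / 24) 1 2)
  refine ((cm 1 2 2).mul hU hsum).congr fun x hx ↦ ?_
  simp [trigammaCorrection_eq hx]

theorem trigammaMajorantDefect_nonneg {x : ℝ} (hx : 0 < x) : 0 ≤ trigammaMajorantDefect x :=
  completelyMonotonicOn_trigammaMajorantDefect.nonneg hx

theorem hasSum_trigammaMajorantDefect {x : ℝ} (hx : 0 < x) :
    HasSum (fun k : ℕ ↦ trigammaMajorantDefect (x + k))
      (trigammaMajorant x - deriv digamma x) := by
  have hstep (k : ℕ) := trigammaMajorant_sub_add_one (x := x + k) (by positivity)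
  have htelescope := hasSum_sub_add_one_of_tendsto_zero (g := trigammaMajorant) (x := x)
    (fun k ↦ sub_nonneg.1 <| hstep k ▸ add_nonneg (by positivity)
      (trigammaMajorantDefect_nonneg (by positivity))) tendsto_trigammaMajorant
  simpa only [hstep, add_sub_cancel_left] using htelescope.sub (hasSum_deriv_digamma hx)

theorem completelyMonotonicOn_trigammaMajorant_sub_deriv_digamma :
    CompletelyMonotonicOn (fun x ↦ trigammaMajorant x - deriv digamma x) (Ioi 0) := by
  have hterm (k : ℕ) :
      CompletelyMonotonicOn (fun x ↦ trigammaMajorantDefect (x + k)) (Ioi 0) :=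
    completelyMonotonicOn_trigammaMajorantDefect.comp_add_const (uniqueDiffOn_Ioi 0) isOpen_Ioi
      fun x (hx : 0 < x) ↦ mem_Ioi.2 (by positivity)
  exact (CompletelyMonotonicOn.tsum isOpen_Ioi (convex_Ioi 0) hterm fun x hx ↦
    (hasSum_trigammaMajorantDefect hx).summable).congr fun x hx ↦
      (hasSum_trigammaMajorantDefect hx).tsum_eq.symm

theorem trigammaMajorantDefect_le {x : ℝ} (hx : 1 ≤ x) :
    trigammaMajorantDefect x ≤ 30 / (x + 1) ^ 6 := by
  have : 0 < x := one_pos.trans_le hx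
  have hprefactor : 1 / (x + 2) ^ 4 * (1 / (x + 3) ^ 2) ≤ 1 / (x + 1) ^ 6 := by
    calc
      1 / (x + 2) ^ 4 * (1 / (x + 3) ^ 2) ≤ 1 / (x + 1) ^ 4 * (1 / (x + 1) ^ 2) := by
        gcongr <;> norm_num
      _ = 1 / (x + 1) ^ 6 := by rw [one_div_mul_one_div, ← pow_add]
  calc
    trigammaMajorantDefect x ≤ 1 / (x + 1) ^ 6 *
        (24 / 1 * (1 / (1 + 1) ^ 4) + 22 / (1 + 1) ^ 4 + 64 / 3 / (1 + 1) ^ 3 +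
          145 / 6 / (1 + 1) ^ 2 + 115 / 6 / (1 + 1) + 41 / 6) := by
      unfold trigammaMajorantDefect; gcongr
    _ ≤ 1 / (x + 1) ^ 6 * 30 := by gcongr; norm_num
    _ = 30 / (x + 1) ^ 6 := one_div_mul_eq_div _ _

theorem const_mul_div_add_one_pow_succ_le (c : ℝ≥0) {x : ℝ} (hx : 0 < x) (m : ℕ) :
    c * m / (x + 1) ^ (m + 1) ≤ c / x ^ m - c / (x + 1) ^ m := by
  have hx₁ : 0 < x + 1 := add_pos hx one_pos
  have hcm : CompletelyMonotonicOn (fun y : ℝ ↦ c / y ^ m) (Ioi 0) := by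
    simpa using completelyMonotonicOn_Ioi_const_div_add_pow c 0 m
  have hderiv : deriv (fun y : ℝ ↦ c / y ^ m) (x + 1) = -(c * m / (x + 1) ^ (m + 1)) := by
    simpa using
      (hasDerivAt_const_div_add_pow c (a := 0) (by simpa using hx₁.ne' : x + 1 + 0 ≠ 0) m).deriv
  have := hcm.neg_deriv_le_sub_div isOpen_Ioi (convex_Ioi 0) hx hx₁ (lt_add_one x)
  rwa [hderiv, neg_neg, add_sub_cancel_left, div_one] at this

theorem trigammaMajorant_sub_deriv_digamma_le {x : ℝ} (hx : 1 ≤ x) :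
    trigammaMajorant x - deriv digamma x ≤ 6 / x ^ 5 := by
  have hx₀ : 0 < x := one_pos.trans_le hx
  have hlim : Tendsto (fun y : ℝ ↦ 6 / y ^ 5) atTop (𝓝 0) := by
    simpa using tendsto_const_div_add_pow_atTop 6 0 (by norm_num : 5 ≠ 0)
  have htelescope := hasSum_sub_add_one_of_tendsto_zero (x := x)
    (fun k ↦ by gcongr 6 / ?_ ^ 5; simp) hlim
  refine hasSum_le (fun k ↦ ?_) (hasSum_trigammaMajorantDefect hx₀) htelescope
  calc
    trigammaMajorantDefect (x + k) ≤ 30 / (x + k + 1) ^ 6 :=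
      trigammaMajorantDefect_le (hx.trans (le_add_of_nonneg_right k.cast_nonneg))
    _ = 6 * (5 : ℕ) / (x + k + 1) ^ (5 + 1) := by norm_num
    _ ≤ 6 / (x + k) ^ 5 - 6 / (x + k + 1) ^ 5 :=
      const_mul_div_add_one_pow_succ_le 6 (by positivity) 5

theorem tendsto_pow_four_mul_trigammaMajorant_sub_deriv_digamma :
    Tendsto (fun x ↦ x ^ 4 * (trigammaMajorant x - deriv digamma x)) atTop (𝓝 0) := by
  have hupper : Tendsto (fun x : ℝ ↦ 6 / x) atTop (𝓝 0) := tendsto_const_nhds.div_atTop tendsto_id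
  refine tendsto_of_tendsto_of_tendsto_of_le_of_le' tendsto_const_nhds hupper ?_ ?_ <;>
    filter_upwards [eventually_ge_atTop 1] with x hx
  · exact mul_nonneg (by positivity) <|
      completelyMonotonicOn_trigammaMajorant_sub_deriv_digamma.nonneg (one_pos.trans_le hx)
  · calc
      x ^ 4 * (trigammaMajorant x - deriv digamma x) ≤ x ^ 4 * (6 / x ^ 5) := by
        gcongr; exact trigammaMajorant_sub_deriv_digamma_le hx
      _ = 6 / x := by field_simp

theorem tendsto_pow_four_mul_trigammaCorrection :
    Tendsto (fun x ↦ x ^ 4 * trigammaCorrection x) atTop (𝓝 (5 / 24)) := by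
  have hcont : ContinuousAt (fun t : ℝ ↦
      (4 * t ^ 2 + 8 * t + 5) / (24 * (1 + t) ^ 3 * (1 + 2 * t) ^ 2)) 0 :=
    ContinuousAt.div (by fun_prop) (by fun_prop) (by norm_num)
  have hlim : Tendsto (fun x : ℝ ↦
      (4 * x⁻¹ ^ 2 + 8 * x⁻¹ + 5) / (24 * (1 + x⁻¹) ^ 3 * (1 + 2 * x⁻¹) ^ 2)) atTop
      (𝓝 (5 / 24)) := by
    simpa [Function.comp_def] using hcont.tendsto.comp tendsto_inv_atTop_zero
  refine hlim.congr' ?_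
  filter_upwards [eventually_gt_atTop 0] with x hx
  rw [trigammaCorrection]
  field_simp
  ring

theorem neg_deriv_digamma_sub_eq (lam : ℝ) {x : ℝ} (hx : 0 < x) :
    -(deriv digamma x -
        lam * (4 + 8 * x + 5 * x ^ 2) / (24 * x * (1 + x) ^ 3 * (2 + x) ^ 2) -
        (24 + 120 * x + 283 * x ^ 2 + 399 * x ^ 3 + 345 * x ^ 4 + 181 * x ^ 5 +
          51 * x ^ 6 + 6 * x ^ 7) / (6 * x ^ 2 * (1 + x) ^ 4 * (2 + x) ^ 2)) =
      trigammaMajorant x - deriv digamma x + (lam - 4) * trigammaCorrection x := by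
  rw [trigammaMajorant, trigammaCorrection, add_comm 1 x, add_comm 2 x]
  field_simp
  ring

theorem stmt_6 (lam : ℝ) :
    CompletelyMonotonicOn
      (fun x : ℝ => -(deriv digamma x -
        lam * (4 + 8 * x + 5 * x ^ 2) / (24 * x * (1 + x) ^ 3 * (2 + x) ^ 2) -
        (24 + 120 * x + 283 * x ^ 2 + 399 * x ^ 3 + 345 * x ^ 4 + 181 * x ^ 5 +
          51 * x ^ 6 + 6 * x ^ 7) / (6 * x ^ 2 * (1 + x) ^ 4 * (2 + x) ^ 2)))
      (Set.Ioi 0) ↔ 4 ≤ lam := by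
  constructor
  · intro h
    have hlim := tendsto_pow_four_mul_trigammaMajorant_sub_deriv_digamma.add
      (tendsto_pow_four_mul_trigammaCorrection.const_mul (lam - 4))
    have hlim_nonneg : 0 ≤ 0 + (lam - 4) * (5 / 24) := by
      refine ge_of_tendsto hlim ?_
      filter_upwards [eventually_gt_atTop 0] with x hx
      have hx_nonneg := neg_deriv_digamma_sub_eq lam hx ▸ h.nonneg hx
      calc
        0 ≤ x ^ 4 * _ := mul_nonneg (by positivity) hx_nonneg
        _ = _ := by ring
    linarith
  · intro hlam
    exact (completelyMonotonicOn_trigammaMajorant_sub_deriv_digamma.add (uniqueDiffOn_Ioi 0)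
      (completelyMonotonicOn_trigammaCorrection.const_mul (sub_nonneg.2 hlam))).congr
      fun x hx ↦ neg_deriv_digamma_sub_eq lam hx
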